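/- The families of relations ⊳_{m,n} and ⊲_{m,n} (n ≥ m ≥ 1) satisfy: (1) u ⊳_{1,n} v if and only if u ⊲_{1,n} v, if and only if u and v have the same scattered subwords of length at most n. (2) For m ≥ 2: u ⊳_{m,n} v if and only if alph(u) = alph(v), u ⊲_{m-1,n-1} v, and for each letter a ∈ alph(u) the a-left factorizations u = u_- a u_+ and v = v_- a v_+ satisfy u_- ⊲_{m-1,n-1} v_- and u_+ ⊳_{m,n-1} v_+ (u_+ ⊳_{m-1,n-1} v_+ if n = m). (3) For m ≥ 2: u ⊲_{m,n} v if and only if alph(u) = alph(v), u ⊳_{m-1,n-1} v, and for each letter a ∈ alph(u) the a-right factorizations u = u_- a u_+ and v = v_- a v_+ satisfy u_+ ⊳_{m-1,n-1} v_+ and u_- ⊲_{m,n-1} v_- (u_- ⊲_{m-1,n-1} v_- if n = m). -/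

import Mathlib

namespace RankerPaper

variable {A : Type*} [DecidableEq A]

/-- Letters of rankers: `X a` ("next `a` to the right") and `Y a` ("next `a` to the left"). -/
inductive RLetter (A : Type*) where
  | X : A → RLetter A
  | Y : A → RLetter A
  deriving DecidableEq

/-- Least `a`-position of `u` strictly greater than `q` (positions are 1-indexed). -/
def nextOcc (u : List A) (a : A) (q : ℕ) : Option ℕ :=
  ((List.range (u.length + 2)).filter (fun i => decide (q < i ∧ u[i-1]? = some a))).head?

/-- Greatest `a`-position of `u` strictly less than `q` (positions are 1-indexed). -/
def prevOcc (u : List A) (a : A) (q : ℕ) : Option ℕ :=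
  ((List.range (u.length + 2)).filter
    (fun i => decide (1 ≤ i ∧ i < q ∧ u[i-1]? = some a))).getLast?

/-- One evaluation step of a ranker letter from position `q`. -/
def stepR (u : List A) : RLetter A → ℕ → Option ℕ
  | .X a, q => nextOcc u a q
  | .Y a, q => prevOcc u a q

/-- Evaluation of a ranker from position `q`, processing letters left to right. -/
def evalFrom (u : List A) : List (RLetter A) → ℕ → Option ℕ
  | [], q => some q
  | z :: r, q => (stepR u z q).bind (evalFrom u r)

/-- Starting position: `0` for an `X`-letter, `|u|+1` for a `Y`-letter. -/
def startPos (u : List A) : RLetter A → ℕ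
  | .X _ => 0
  | .Y _ => u.length + 1

/-- The position `r(u)` defined by the ranker `r` on `u` (`none` if undefined;
empty rankers are considered undefined, rankers being nonempty words). -/
def evalR (u : List A) (r : List (RLetter A)) : Option ℕ :=
  match r with
  | [] => none
  | z :: t => evalFrom u (z :: t) (startPos u z)

/-- `r` is defined on `u`. -/
def Defined (u : List A) (r : List (RLetter A)) : Prop := (evalR u r).isSome

/-- The position `r(u)` (defaulting to `0` when undefined). -/
def pos (u : List A) (r : List (RLetter A)) : ℕ := (evalR u r).getD 0

/-- Do two ranker letters have the same direction? -/
def sameDir : RLetter A → RLetter A → Bool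
  | .X _, .X _ => true
  | .Y _, .Y _ => true
  | _, _ => false

/-- Number of (alternating) blocks of a ranker. -/
def numBlocks : List (RLetter A) → ℕ
  | [] => 0
  | [_] => 1
  | z :: w :: t => (if sameDir z w then 0 else 1) + numBlocks (w :: t)

def startsX (r : List (RLetter A)) : Prop := ∃ a t, r = RLetter.X a :: t
def startsY (r : List (RLetter A)) : Prop := ∃ a t, r = RLetter.Y a :: t
def endsX (r : List (RLetter A)) : Prop := ∃ a, r.getLast? = some (RLetter.X a)
def endsY (r : List (RLetter A)) : Prop := ∃ a, r.getLast? = some (RLetter.Y a)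

/-- `R^X_{m,n}`: rankers with exactly `m` blocks, depth `n`, starting with an `X`-block. -/
def RX (m n : ℕ) (r : List (RLetter A)) : Prop :=
  numBlocks r = m ∧ r.length = n ∧ startsX r

/-- `R^Y_{m,n}`: rankers with exactly `m` blocks, depth `n`, starting with a `Y`-block. -/
def RY (m n : ℕ) (r : List (RLetter A)) : Prop :=
  numBlocks r = m ∧ r.length = n ∧ startsY r

/-- `uR^X_{m,n}`. -/
def uRX (m n : ℕ) (r : List (RLetter A)) : Prop :=
  (∃ m' n', m' ≤ m ∧ n' ≤ n ∧ RX m' n' r) ∨ (∃ m' n', m' < m ∧ n' < n ∧ RY m' n' r)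

/-- `uR^Y_{m,n}`. -/
def uRY (m n : ℕ) (r : List (RLetter A)) : Prop :=
  (∃ m' n', m' ≤ m ∧ n' ≤ n ∧ RY m' n' r) ∨ (∃ m' n', m' < m ∧ n' < n ∧ RX m' n' r)

/-- `uR_{m,n} = uR^X_{m,n} ∪ uR^Y_{m,n}`. -/
def uR (m n : ℕ) (r : List (RLetter A)) : Prop := uRX m n r ∨ uRY m n r

/-- `uR^X_m = ∪_{n ≥ m} uR^X_{m,n}`. -/
def uRXm (m : ℕ) (r : List (RLetter A)) : Prop := ∃ n, m ≤ n ∧ uRX m n r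

/-- `uR^Y_m = ∪_{n ≥ m} uR^Y_{m,n}`. -/
def uRYm (m : ℕ) (r : List (RLetter A)) : Prop := ∃ n, m ≤ n ∧ uRY m n r

/-- `r = Z₁ ⋯ Z_n` is condensed on `u`: it is defined on `u` and there is a chain of
open intervals `(0;|u|+1) = (i₀;j₀) ⊃ (i₁;j₁) ⊃ ⋯ ⊃ (i_{n-1};j_{n-1}) ∋ r(u)`
updated according to the pairs `Z_ℓ Z_{ℓ+1}`. -/
def Condensed (u : List A) (r : List (RLetter A)) : Prop :=
  ∃ (p : ℕ) (i j : ℕ → ℕ),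
    evalR u r = some p ∧
    i 0 = 0 ∧ j 0 = u.length + 1 ∧
    (∀ ℓ a b, 1 ≤ ℓ → r[ℓ-1]? = some (RLetter.X a) → r[ℓ]? = some (RLetter.X b) →
        nextOcc u a (i (ℓ-1)) = some (i ℓ) ∧ j ℓ = j (ℓ-1)) ∧
    (∀ ℓ a b, 1 ≤ ℓ → r[ℓ-1]? = some (RLetter.Y a) → r[ℓ]? = some (RLetter.Y b) →
        i ℓ = i (ℓ-1) ∧ prevOcc u a (j (ℓ-1)) = some (j ℓ)) ∧
    (∀ ℓ a b, 1 ≤ ℓ → r[ℓ-1]? = some (RLetter.X a) → r[ℓ]? = some (RLetter.Y b) →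
        i ℓ = i (ℓ-1) ∧ nextOcc u a (i (ℓ-1)) = some (j ℓ)) ∧
    (∀ ℓ a b, 1 ≤ ℓ → r[ℓ-1]? = some (RLetter.Y a) → r[ℓ]? = some (RLetter.X b) →
        prevOcc u a (j (ℓ-1)) = some (i ℓ) ∧ j ℓ = j (ℓ-1)) ∧
    (∀ ℓ, 1 ≤ ℓ → ℓ < r.length →
        i (ℓ-1) ≤ i ℓ ∧ j ℓ ≤ j (ℓ-1) ∧ (i (ℓ-1) < i ℓ ∨ j ℓ < j (ℓ-1))) ∧
    i (r.length - 1) < p ∧ p < j (r.length - 1)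

/-- `u` and `v` agree on rankers from the set `R`. -/
def AgreeDef (R : List (RLetter A) → Prop) (u v : List A) : Prop :=
  ∀ r, R r → (Defined u r ↔ Defined v r)

/-- `u` and `v` agree on condensed rankers from the set `R`. -/
def AgreeCond (R : List (RLetter A) → Prop) (u v : List A) : Prop :=
  ∀ r, R r → (Condensed u r ↔ Condensed v r)

/-- `u ⊳_{m,n} v`. -/
def trir (m n : ℕ) (u v : List A) : Prop := AgreeCond (uRX m n) u v

/-- `u ⊲_{m,n} v`. -/
def tril (m n : ℕ) (u v : List A) : Prop := AgreeCond (uRY m n) u v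

/-- The alphabet (set of letters) of a word. -/
def alph (u : List A) : Finset A := u.toFinset

/-- Condition (WI 1). -/
def WI1 (m n : ℕ) (u v : List A) : Prop := AgreeDef (uR m n) u v

/-- Condition (WI 2). -/
def WI2 (m n : ℕ) (u v : List A) : Prop :=
  ∀ r r', uR m n r → uR (m-1) (n-1) r' →
    Defined u r → Defined v r → Defined u r' → Defined v r' →
    compare (pos u r) (pos u r') = compare (pos v r) (pos v r')

/-- Condition (WI 3). -/
def WI3 (m n : ℕ) (u v : List A) : Prop :=
  ∀ r r', uR m n r → uR m (n-1) r' →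
    ((endsX r ∧ endsY r') ∨ (endsY r ∧ endsX r')) →
    Defined u r → Defined v r → Defined u r' → Defined v r' →
    compare (pos u r) (pos u r') = compare (pos v r) (pos v r')

/-- Condition (WI 1c). -/
def WI1c (m n : ℕ) (u v : List A) : Prop := AgreeCond (uR m n) u v

/-- Condition (WI 2c). -/
def WI2c (m n : ℕ) (u v : List A) : Prop :=
  ∀ r r', uR m n r → uR (m-1) (n-1) r' →
    Condensed u r → Condensed v r → Condensed u r' → Condensed v r' →
    compare (pos u r) (pos u r') = compare (pos v r) (pos v r')

/-- Condition (WI 3c). -/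
def WI3c (m n : ℕ) (u v : List A) : Prop :=
  ∀ r r', uR m n r → uR m (n-1) r' →
    ((endsX r ∧ endsY r') ∨ (endsY r ∧ endsX r')) →
    Condensed u r → Condensed v r → Condensed u r' → Condensed v r' →
    compare (pos u r) (pos u r') = compare (pos v r) (pos v r')


theorem nextOcc_iff (u : List A) (a : A) (q p : ℕ) : nextOcc u a q = some p ↔
    q < p ∧ u[p-1]? = some a ∧ ∀ k, q < k → k < p → u[k-1]? ≠ some a := by
  unfold nextOcc
  rw [List.head?_filter, List.find?_range_eq_some]
  simp only [decide_eq_true_eq, List.mem_range, Bool.not_eq_true', decide_eq_false_iff_not]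
  constructor
  · rintro ⟨⟨h1, h2⟩, h3, h4⟩
    exact ⟨h1, h2, fun k hk hk' h => h4 k hk' ⟨hk, h⟩⟩
  · rintro ⟨h1, h2, h3⟩
    refine ⟨⟨h1, h2⟩, ?_, fun k hk h => h3 k h.1 hk h.2⟩
    have := (List.getElem?_eq_some_iff.1 h2).1
    omega

theorem prevOcc_aux (P : ℕ → Bool) (n p : ℕ) :
    ((List.range n).filter P).getLast? = some p ↔
      p < n ∧ P p ∧ ∀ k, p < k → k < n → ¬ P k := by
  induction n with
  | zero => simp
  | succ n ih =>
    rw [List.range_succ, List.filter_append]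
    by_cases h : P n = true
    · simp [h]
      constructor
      · rintro rfl
        exact ⟨by omega, h, fun k _ _ => by omega⟩
      · rintro ⟨h1, h2, h3⟩
        by_contra hne
        have := h3 n (by omega) (by omega)
        simp [h] at this
    · simp only [h, List.filter_cons, List.filter_nil, List.append_nil, Bool.false_eq_true, if_false]
      rw [ih]
      constructor
      · rintro ⟨h1, h2, h3⟩
        refine ⟨by omega, h2, fun k hk hk' => ?_⟩
        by_cases hkn : k = n
        · rw [hkn]; exact h
        · exact h3 k hk (by omega)
      · rintro ⟨h1, h2, h3⟩
        have : p ≠ n := by rintro rfl; exact h h2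
        exact ⟨by omega, h2, fun k hk hk' => h3 k hk (by omega)⟩

theorem prevOcc_iff (u : List A) (a : A) (q p : ℕ) : prevOcc u a q = some p ↔
    1 ≤ p ∧ p < q ∧ u[p-1]? = some a ∧ ∀ k, p < k → k < q → u[k-1]? ≠ some a := by
  unfold prevOcc
  rw [prevOcc_aux]
  simp only [decide_eq_true_eq]
  constructor
  · rintro ⟨h0, ⟨h1, h2, h3⟩, h4⟩
    refine ⟨h1, h2, h3, fun k hk hk' h => ?_⟩
    have := (List.getElem?_eq_some_iff.1 h).1
    exact h4 k hk (by omega) ⟨by omega, hk', h⟩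
  · rintro ⟨h1, h2, h3, h4⟩
    have := (List.getElem?_eq_some_iff.1 h3).1
    exact ⟨by omega, ⟨h1, h2, h3⟩, fun k hk _ h => h4 k hk h.2.1 h.2.2⟩

theorem fact_left (w : List A) (a : A) (h : a ∈ w) :
    ∃ w1 w2, w = w1 ++ a :: w2 ∧ a ∉ w1 := by
  obtain ⟨s, t, h1, h2⟩ := List.append_of_mem h |> fun _ => List.eq_append_cons_of_mem h
  exact ⟨s, t, h1, h2⟩

theorem fact_right (w : List A) (a : A) (h : a ∈ w) :
    ∃ w1 w2, w = w1 ++ a :: w2 ∧ a ∉ w2 := by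
  obtain ⟨s, t, h1, h2⟩ := fact_left w.reverse a (by simpa using h)
  refine ⟨t.reverse, s.reverse, ?_, by simpa using h2⟩
  have := congrArg List.reverse h1
  simpa using this

theorem uniq_left {a : A} : ∀ {w1 w2 x1 x2 : List A}, w1 ++ a :: w2 = x1 ++ a :: x2 →
    a ∉ w1 → a ∉ x1 → w1 = x1 ∧ w2 = x2
  | [], _, [], _, h, _, _ => by simpa using h
  | [], _, c :: x1, _, h, _, h2 => by
      simp at h h2; exact absurd h.1 h2.1
  | c :: w1, _, [], _, h, h1, _ => by
      simp at h h1; exact absurd h.1.symm h1.1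
  | c :: w1, _, d :: x1, _, h, h1, h2 => by
      simp at h h1 h2
      have := uniq_left h.2 h1.2 h2.2
      exact ⟨by rw [h.1, this.1], this.2⟩

theorem uniq_right {a : A} {w1 w2 x1 x2 : List A} (h : w1 ++ a :: w2 = x1 ++ a :: x2)
    (h1 : a ∉ w2) (h2 : a ∉ x2) : w1 = x1 ∧ w2 = x2 := by
  have := congrArg List.reverse h
  simp only [List.reverse_append, List.reverse_cons, List.append_assoc, List.singleton_append] at this
  have := uniq_left this (by simpa using h1) (by simpa using h2)
  simpa using this.symm

/-- recursive form of condensedness -/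
def CC : List (RLetter A) → List A → Prop
  | [], _ => False
  | [.X a], w => a ∈ w
  | [.Y a], w => a ∈ w
  | .X a :: .X b :: t, w => ∃ w1 w2, w = w1 ++ a :: w2 ∧ a ∉ w1 ∧ CC (.X b :: t) w2
  | .X a :: .Y b :: t, w => ∃ w1 w2, w = w1 ++ a :: w2 ∧ a ∉ w1 ∧ CC (.Y b :: t) w1
  | .Y a :: .Y b :: t, w => ∃ w1 w2, w = w1 ++ a :: w2 ∧ a ∉ w2 ∧ CC (.Y b :: t) w1
  | .Y a :: .X b :: t, w => ∃ w1 w2, w = w1 ++ a :: w2 ∧ a ∉ w2 ∧ CC (.X b :: t) w2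

/-- one interval step -/
def StepI (u : List A) : RLetter A → RLetter A → ℕ → ℕ → ℕ → ℕ → Prop
  | .X a, .X _, i, j, i', j' => nextOcc u a i = some i' ∧ j' = j
  | .Y a, .Y _, i, j, i', j' => i' = i ∧ prevOcc u a j = some j'
  | .X a, .Y _, i, j, i', j' => i' = i ∧ nextOcc u a i = some j' ∧ j' < j
  | .Y a, .X _, i, j, i', j' => prevOcc u a j = some i' ∧ j' = j ∧ i < i'

def stp : RLetter A → ℕ → ℕ → ℕ
  | .X _, i, _ => i
  | .Y _, _, j => j

def Cd (u : List A) (i j : ℕ) : List (RLetter A) → Prop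
  | [] => False
  | z :: t => ∃ (p : ℕ) (I J : ℕ → ℕ), evalFrom u (z :: t) (stp z i j) = some p ∧
      I 0 = i ∧ J 0 = j ∧
      (∀ l x y, (z :: t)[l]? = some x → (z :: t)[l+1]? = some y →
        StepI u x y (I l) (J l) (I (l+1)) (J (l+1))) ∧
      I t.length < p ∧ p < J t.length

theorem StepI_mono {u : List A} {x y : RLetter A} {i j i' j' : ℕ} (h : StepI u x y i j i' j') :
    i ≤ i' ∧ j' ≤ j ∧ (i < i' ∨ j' < j) := by
  cases x <;> cases y <;> simp only [StepI, nextOcc_iff, prevOcc_iff] at h <;> omega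

theorem Cd_iff (u : List A) (r : List (RLetter A)) :
    Condensed u r ↔ Cd u 0 (u.length + 1) r := by
  cases r with
  | nil => simp [Condensed, Cd, evalR]
  | cons z t =>
    simp only [Condensed, Cd, evalR]
    refine exists_congr fun p => exists_congr fun I => exists_congr fun J => ?_
    have hs : stp z 0 (u.length + 1) = startPos u z := by cases z <;> rfl
    rw [hs]
    constructor
    · rintro ⟨h1, h2, h3, h4, h5, h6, h7, h8, h9, h10⟩
      refine ⟨h1, h2, h3, ?_, by simpa using h9, by simpa using h10⟩
      intro l x y hx hy
      have hl := (List.getElem?_eq_some_iff.1 hy).1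
      have h8' := h8 (l+1) (by omega) hl
      simp only [Nat.add_sub_cancel] at h8'
      cases x <;> cases y
      · exact h4 (l+1) _ _ (by omega) hx hy
      · have := h6 (l+1) _ _ (by omega) hx hy
        simp only [Nat.add_sub_cancel] at this
        exact ⟨this.1, this.2, by omega⟩
      · have := h7 (l+1) _ _ (by omega) hx hy
        simp only [Nat.add_sub_cancel] at this
        exact ⟨this.1, this.2, by omega⟩
      · exact h5 (l+1) _ _ (by omega) hx hy
    · rintro ⟨h1, h2, h3, h4, h5, h6⟩
      refine ⟨h1, h2, h3, ?_, ?_, ?_, ?_, ?_, by simpa using h5, by simpa using h6⟩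
      · rintro (_ | l) a b hl hx hy
        · omega
        · exact h4 l _ _ hx hy
      · rintro (_ | l) a b hl hx hy
        · omega
        · exact h4 l _ _ hx hy
      · rintro (_ | l) a b hl hx hy
        · omega
        · have := h4 l _ _ hx hy
          exact ⟨this.1, this.2.1⟩
      · rintro (_ | l) a b hl hx hy
        · omega
        · have := h4 l _ _ hx hy
          exact ⟨this.1, this.2.1⟩
      · rintro (_ | l) hl hx
        · omega
        · exact StepI_mono (h4 l _ _ (List.getElem?_eq_getElem (by omega)) (List.getElem?_eq_getElem hx))

theorem StepI_eval {u : List A} {x y : RLetter A} {i j i' j' : ℕ} (h : StepI u x y i j i' j') :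
    stepR u x (stp x i j) = some (stp y i' j') := by
  cases x <;> cases y <;> simp only [StepI] at h <;> simp [stepR, stp, h]

theorem Cd_cons (u : List A) (i j : ℕ) (z w : RLetter A) (t : List (RLetter A)) :
    Cd u i j (z :: w :: t) ↔ ∃ i' j', StepI u z w i j i' j' ∧ Cd u i' j' (w :: t) := by
  constructor
  · rintro ⟨p, I, J, h1, rfl, rfl, h4, h5, h6⟩
    have hs := h4 0 z w rfl rfl
    refine ⟨I 1, J 1, hs, p, fun l => I (l+1), fun l => J (l+1), ?_, rfl, rfl, ?_, h5, h6⟩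
    · rw [evalFrom, StepI_eval hs] at h1
      exact h1
    · intro l x y hx hy
      exact h4 (l+1) x y hx hy
  · rintro ⟨i', j', hs, p, I, J, h1, rfl, rfl, h4, h5, h6⟩
    refine ⟨p, fun l => Nat.casesOn l i I, fun l => Nat.casesOn l j J, ?_, rfl, rfl, ?_, h5, h6⟩
    · rw [evalFrom, StepI_eval hs]; exact h1
    · rintro (_ | l) x y hx hy
      · simp at hx hy
        subst hx hy
        exact hs
      · exact h4 l x y hx hy

theorem Cd_lt (u : List A) (r : List (RLetter A)) : ∀ i j, Cd u i j r → i < j := by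
  induction r with
  | nil => intro i j h; exact h.elim
  | cons z t ih =>
    intro i j h
    cases t with
    | nil =>
      obtain ⟨p, I, J, h1, rfl, rfl, h4, h5, h6⟩ := h
      exact h5.trans h6
    | cons w t =>
      obtain ⟨i', j', hs, h⟩ := (Cd_cons ..).1 h
      have := StepI_mono hs
      have := ih _ _ h
      omega

theorem getElem?_mid (x w y : List A) (k : ℕ) (h1 : x.length < k) (h2 : k ≤ x.length + w.length) :
    (x ++ w ++ y)[k-1]? = w[k-1-x.length]? := by
  rw [List.getElem?_append_left (by simp <;> omega), List.getElem?_append_right (by omega)]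

theorem next_fact (x w y : List A) (a : A) (p : ℕ) :
    (nextOcc (x ++ w ++ y) a x.length = some p ∧ p < x.length + w.length + 1) ↔
    ∃ w1 w2, w = w1 ++ a :: w2 ∧ a ∉ w1 ∧ p = x.length + w1.length + 1 := by
  rw [nextOcc_iff]
  constructor
  · rintro ⟨⟨h1, h2, h3⟩, h4⟩
    rw [getElem?_mid _ _ _ _ h1 (by omega)] at h2
    have hm := List.mem_of_getElem? h2
    obtain ⟨w1, w2, rfl, hw⟩ := fact_left w a hm
    refine ⟨w1, w2, rfl, hw, ?_⟩
    simp at h4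
    rcases lt_trichotomy p (x.length + w1.length + 1) with h | h | h
    · rw [List.getElem?_append_left (by omega)] at h2
      exact absurd (List.mem_of_getElem? h2) hw
    · exact h
    · refine absurd ?_ (h3 (x.length + w1.length + 1) (by omega) h)
      rw [getElem?_mid _ _ _ _ (by omega) (by simp <;> omega)]
      rw [show x.length + w1.length + 1 - 1 - x.length = w1.length by omega]
      simp
  · rintro ⟨w1, w2, rfl, hw, rfl⟩
    refine ⟨⟨by omega, ?_, ?_⟩, by simp <;> omega⟩
    · rw [getElem?_mid _ _ _ _ (by omega) (by simp <;> omega)]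
      rw [show x.length + w1.length + 1 - 1 - x.length = w1.length by omega]
      simp
    · intro k hk hk' h
      rw [getElem?_mid _ _ _ _ (by omega) (by simp <;> omega), List.getElem?_append_left (by omega)] at h
      exact hw (List.mem_of_getElem? h)

theorem prev_fact (x w y : List A) (a : A) (p : ℕ) :
    (prevOcc (x ++ w ++ y) a (x.length + w.length + 1) = some p ∧ x.length < p) ↔
    ∃ w1 w2, w = w1 ++ a :: w2 ∧ a ∉ w2 ∧ p = x.length + w1.length + 1 := by
  rw [prevOcc_iff]
  constructor
  · rintro ⟨⟨h0, h1, h2, h3⟩, h4⟩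
    rw [getElem?_mid _ _ _ _ h4 (by omega)] at h2
    have hm := List.mem_of_getElem? h2
    obtain ⟨w1, w2, rfl, hw⟩ := fact_right w a hm
    refine ⟨w1, w2, rfl, hw, ?_⟩
    simp at h1
    rcases lt_trichotomy p (x.length + w1.length + 1) with h | h | h
    · refine absurd ?_ (h3 (x.length + w1.length + 1) (by omega) (by simp <;> omega))
      rw [getElem?_mid _ _ _ _ (by omega) (by simp <;> omega)]
      rw [show x.length + w1.length + 1 - 1 - x.length = w1.length by omega]
      simp
    · exact h
    · rw [List.getElem?_append_right (by omega),
        show p - 1 - x.length - w1.length = (p - 2 - x.length - w1.length) + 1 by omega,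
        List.getElem?_cons_succ] at h2
      exact absurd (List.mem_of_getElem? h2) hw
  · rintro ⟨w1, w2, rfl, hw, rfl⟩
    refine ⟨⟨by omega, by simp <;> omega, ?_, ?_⟩, by omega⟩
    · rw [getElem?_mid _ _ _ _ (by omega) (by simp <;> omega)]
      rw [show x.length + w1.length + 1 - 1 - x.length = w1.length by omega]
      simp
    · intro k hk hk' h
      simp at hk'
      rw [getElem?_mid _ _ _ _ (by omega) (by simp <;> omega), List.getElem?_append_right (by omega),
        show k - 1 - x.length - w1.length = (k - 2 - x.length - w1.length) + 1 by omega,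
        List.getElem?_cons_succ] at h
      exact hw (List.mem_of_getElem? h)

theorem Cd_CC (u : List A) (r : List (RLetter A)) : ∀ x w y, u = x ++ w ++ y →
    (Cd u x.length (x.length + w.length + 1) r ↔ CC r w) := by
  induction r with
  | nil => intro x w y h; simp [Cd, CC]
  | cons z t ih =>
    intro x w y hu
    cases t with
    | nil =>
      cases z with
      | X a =>
        constructor
        · rintro ⟨p, I, J, h1, h2, h3, h4, h5, h6⟩
          simp [evalFrom, stepR, stp] at h1
          simp [h2, h3] at h5 h6
          obtain ⟨w1, w2, rfl, -⟩ := (next_fact x w y a p).1 ⟨hu ▸ h1, by omega⟩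
          simp [CC]
        · intro h
          obtain ⟨w1, w2, h1, h2⟩ := fact_left w a h
          have := (next_fact x w y a _).2 ⟨w1, w2, h1, h2, rfl⟩
          refine ⟨_, fun _ => x.length, fun _ => x.length + w.length + 1, ?_, rfl, rfl, ?_, ?_, this.2⟩
          · simp [evalFrom, stepR, stp]
            rw [hu]; exact this.1
          · intro l x y h1 h2; simp at h2
          · simp only; omega
      | Y a =>
        constructor
        · rintro ⟨p, I, J, h1, h2, h3, h4, h5, h6⟩
          simp [evalFrom, stepR, stp] at h1
          simp [h2, h3] at h5 h6
          obtain ⟨w1, w2, rfl, -⟩ := (prev_fact x w y a p).1 ⟨hu ▸ h1, h5⟩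
          simp [CC]
        · intro h
          obtain ⟨w1, w2, h1, h2⟩ := fact_right w a h
          have := (prev_fact x w y a _).2 ⟨w1, w2, h1, h2, rfl⟩
          refine ⟨_, fun _ => x.length, fun _ => x.length + w.length + 1, ?_, rfl, rfl, ?_, this.2, ?_⟩
          · simp [evalFrom, stepR, stp]
            rw [hu]; exact this.1
          · intro l x y h1 h2; simp at h2
          · rw [h1]; simp
    | cons z' t =>
      rw [Cd_cons]
      cases z with
      | X a =>
        cases z' with
        | X b =>
          simp only [CC]
          constructor
          · rintro ⟨i', j', ⟨h1, rfl⟩, h2⟩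
            have := Cd_lt _ _ _ _ h2
            obtain ⟨w1, w2, rfl, hw, rfl⟩ := (next_fact x w y a i').1 ⟨hu ▸ h1, this⟩
            refine ⟨w1, w2, rfl, hw, ?_⟩
            refine (ih (x ++ w1 ++ [a]) w2 y (by simp [hu])).1 ?_
            convert h2 using 1 <;> simp <;> omega
          · rintro ⟨w1, w2, rfl, hw, h⟩
            have := (next_fact x _ y a _).2 ⟨w1, w2, rfl, hw, rfl⟩
            refine ⟨_, _, ⟨hu ▸ this.1, rfl⟩, ?_⟩
            have := (ih (x ++ w1 ++ [a]) w2 y (by simp [hu])).2 h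
            convert this using 1 <;> simp <;> omega
        | Y b =>
          simp only [CC]
          constructor
          · rintro ⟨i', j', ⟨rfl, h1, h3⟩, h2⟩
            obtain ⟨w1, w2, rfl, hw, rfl⟩ := (next_fact x w y a j').1 ⟨hu ▸ h1, h3⟩
            refine ⟨w1, w2, rfl, hw, ?_⟩
            exact (ih x w1 (a :: w2 ++ y) (by simp [hu])).1 h2
          · rintro ⟨w1, w2, rfl, hw, h⟩
            have := (next_fact x _ y a _).2 ⟨w1, w2, rfl, hw, rfl⟩
            refine ⟨_, _, ⟨rfl, hu ▸ this.1, this.2⟩, ?_⟩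
            exact (ih x w1 (a :: w2 ++ y) (by simp [hu])).2 h
      | Y a =>
        cases z' with
        | X b =>
          simp only [CC]
          constructor
          · rintro ⟨i', j', ⟨h1, rfl, h3⟩, h2⟩
            obtain ⟨w1, w2, rfl, hw, rfl⟩ := (prev_fact x w y a i').1 ⟨hu ▸ h1, h3⟩
            refine ⟨w1, w2, rfl, hw, ?_⟩
            refine (ih (x ++ w1 ++ [a]) w2 y (by simp [hu])).1 ?_
            convert h2 using 1 <;> simp <;> omega
          · rintro ⟨w1, w2, rfl, hw, h⟩
            have := (prev_fact x _ y a _).2 ⟨w1, w2, rfl, hw, rfl⟩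
            refine ⟨_, _, ⟨hu ▸ this.1, rfl, this.2⟩, ?_⟩
            have := (ih (x ++ w1 ++ [a]) w2 y (by simp [hu])).2 h
            convert this using 1 <;> simp <;> omega
        | Y b =>
          simp only [CC]
          constructor
          · rintro ⟨i', j', ⟨rfl, h1⟩, h2⟩
            have := Cd_lt _ _ _ _ h2
            obtain ⟨w1, w2, rfl, hw, rfl⟩ := (prev_fact x w y a j').1 ⟨hu ▸ h1, this⟩
            refine ⟨w1, w2, rfl, hw, ?_⟩
            exact (ih x w1 (a :: w2 ++ y) (by simp [hu])).1 h2
          · rintro ⟨w1, w2, rfl, hw, h⟩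
            have := (prev_fact x _ y a _).2 ⟨w1, w2, rfl, hw, rfl⟩
            refine ⟨_, _, ⟨rfl, hu ▸ this.1⟩, ?_⟩
            exact (ih x w1 (a :: w2 ++ y) (by simp [hu])).2 h

theorem Condensed_iff (u : List A) (r : List (RLetter A)) : Condensed u r ↔ CC r u := by
  rw [Cd_iff]
  have := Cd_CC u r [] u [] (by simp)
  simpa using this

theorem CC_XX {a b : A} {t : List (RLetter A)} {w1 w2 : List A} (h : a ∉ w1) :
    CC (.X a :: .X b :: t) (w1 ++ a :: w2) ↔ CC (.X b :: t) w2 := by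
  simp only [CC]
  constructor
  · rintro ⟨x1, x2, h1, h2, h3⟩
    obtain ⟨rfl, rfl⟩ := uniq_left h1 h h2
    exact h3
  · intro h3; exact ⟨_, _, rfl, h, h3⟩

theorem CC_XY {a b : A} {t : List (RLetter A)} {w1 w2 : List A} (h : a ∉ w1) :
    CC (.X a :: .Y b :: t) (w1 ++ a :: w2) ↔ CC (.Y b :: t) w1 := by
  simp only [CC]
  constructor
  · rintro ⟨x1, x2, h1, h2, h3⟩
    obtain ⟨rfl, rfl⟩ := uniq_left h1 h h2
    exact h3
  · intro h3; exact ⟨_, _, rfl, h, h3⟩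

theorem CC_mem {a : A} {s : List (RLetter A)} {w : List A} (h : CC (.X a :: s) w) : a ∈ w := by
  rcases s with _ | ⟨_ | _, t⟩
  · exact h
  · obtain ⟨w1, w2, rfl, _⟩ := h; simp
  · obtain ⟨w1, w2, rfl, _⟩ := h; simp

/-- exchange of directions -/
def flp : RLetter A → RLetter A
  | .X a => .Y a
  | .Y a => .X a

theorem flp_flp (r : List (RLetter A)) : (r.map flp).map flp = r := by
  rw [List.map_map]
  convert List.map_id r
  funext x; cases x <;> rfl

theorem CC_flp1 (r : List (RLetter A)) : ∀ w, CC r w → CC (r.map flp) w.reverse := by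
  induction r with
  | nil => intro w h; exact h
  | cons z t ih =>
    intro w h
    rcases t with _ | ⟨z', t⟩
    · cases z <;> simpa [flp, CC] using h
    · rcases z with a | a <;> rcases z' with b | b <;> obtain ⟨w1, w2, rfl, h1, h2⟩ := h <;>
        exact ⟨w2.reverse, w1.reverse, by simp, by simpa using h1, ih _ h2⟩

theorem CC_flp (r : List (RLetter A)) (w : List A) : CC (r.map flp) w.reverse ↔ CC r w := by
  constructor
  · intro h
    have := CC_flp1 _ _ h
    rwa [flp_flp, List.reverse_reverse] at this
  · exact CC_flp1 r w

theorem numBlocks_flp (r : List (RLetter A)) : numBlocks (r.map flp) = numBlocks r := by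
  induction r with
  | nil => rfl
  | cons z t ih =>
    rcases t with _ | ⟨z', t⟩
    · rfl
    · have : sameDir (flp z) (flp z') = sameDir z z' := by cases z <;> cases z' <;> rfl
      simp only [List.map_cons, numBlocks, this] at ih ⊢
      rw [ih]

def nY (r : List (RLetter A)) : Prop := startsY r

theorem startsX_flp (r : List (RLetter A)) : startsX (r.map flp) ↔ startsY r := by
  rcases r with _ | ⟨_ | _, t⟩ <;> simp [startsX, startsY, flp]

theorem startsY_flp (r : List (RLetter A)) : startsY (r.map flp) ↔ startsX r := by
  rcases r with _ | ⟨_ | _, t⟩ <;> simp [startsX, startsY, flp]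

theorem uRX_iff (m n : ℕ) (r : List (RLetter A)) : uRX m n r ↔
    (startsX r ∧ numBlocks r ≤ m ∧ r.length ≤ n) ∨
    (startsY r ∧ numBlocks r < m ∧ r.length < n) := by
  unfold uRX RX RY
  constructor
  · rintro (⟨_, _, h1, h2, rfl, rfl, h3⟩ | ⟨_, _, h1, h2, rfl, rfl, h3⟩)
    · exact Or.inl ⟨h3, h1, h2⟩
    · exact Or.inr ⟨h3, h1, h2⟩
  · rintro (⟨h1, h2, h3⟩ | ⟨h1, h2, h3⟩)
    · exact Or.inl ⟨_, _, h2, h3, rfl, rfl, h1⟩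
    · exact Or.inr ⟨_, _, h2, h3, rfl, rfl, h1⟩

theorem uRY_iff (m n : ℕ) (r : List (RLetter A)) : uRY m n r ↔
    (startsY r ∧ numBlocks r ≤ m ∧ r.length ≤ n) ∨
    (startsX r ∧ numBlocks r < m ∧ r.length < n) := by
  unfold uRY RX RY
  constructor
  · rintro (⟨_, _, h1, h2, rfl, rfl, h3⟩ | ⟨_, _, h1, h2, rfl, rfl, h3⟩)
    · exact Or.inl ⟨h3, h1, h2⟩
    · exact Or.inr ⟨h3, h1, h2⟩
  · rintro (⟨h1, h2, h3⟩ | ⟨h1, h2, h3⟩)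
    · exact Or.inl ⟨_, _, h2, h3, rfl, rfl, h1⟩
    · exact Or.inr ⟨_, _, h2, h3, rfl, rfl, h1⟩

theorem uRX_flp (m n : ℕ) (r : List (RLetter A)) : uRX m n (r.map flp) ↔ uRY m n r := by
  rw [uRX_iff, uRY_iff, startsX_flp, startsY_flp, numBlocks_flp, List.length_map]

theorem trir_iff (m n : ℕ) (u v : List A) : trir m n u v ↔
    ∀ r, uRX m n r → (CC r u ↔ CC r v) := by
  simp only [trir, AgreeCond, Condensed_iff]

theorem tril_iff (m n : ℕ) (u v : List A) : tril m n u v ↔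
    ∀ r, uRY m n r → (CC r u ↔ CC r v) := by
  simp only [tril, AgreeCond, Condensed_iff]

theorem trir_rev (m n : ℕ) (u v : List A) : trir m n u.reverse v.reverse ↔ tril m n u v := by
  rw [trir_iff, tril_iff]
  constructor
  · intro h r hr
    have := h (r.map flp) ((uRX_flp _ _ _).2 hr)
    rwa [CC_flp, CC_flp] at this
  · intro h r hr
    rw [← flp_flp r, uRX_flp] at hr
    have := h _ hr
    rw [← CC_flp _ u, ← CC_flp _ v, flp_flp] at this
    exact this

theorem tril_rev (m n : ℕ) (u v : List A) : tril m n u.reverse v.reverse ↔ trir m n u v := by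
  rw [← trir_rev, List.reverse_reverse, List.reverse_reverse]

theorem sub_fact {a : A} {h w1 w2 : List A} (ha : a ∉ w1) :
    (a :: h).Sublist (w1 ++ a :: w2) ↔ h.Sublist w2 := by
  induction w1 with
  | nil => simp
  | cons c w1 ih =>
    simp at ha
    rw [List.cons_append, ← ih ha.2]
    constructor
    · intro hs
      cases hs with
      | cons _ hs => exact hs
      | cons_cons _ hs => exact absurd rfl ha.1
    · intro hs; exact hs.cons _

theorem CC_mapX (w : List A) : ∀ u : List A, w ≠ [] →
    (CC (w.map RLetter.X) u ↔ w.Sublist u) := by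
  induction w with
  | nil => intro u h; exact absurd rfl h
  | cons a w ih =>
    intro u _
    rcases w with _ | ⟨b, w⟩
    · simp [CC]
    · by_cases ha : a ∈ u
      · obtain ⟨u1, u2, rfl, h1⟩ := fact_left u a ha
        rw [sub_fact h1, ← ih _ (by simp)]
        exact CC_XX h1
      · constructor
        · intro h; exact absurd (CC_mem h) ha
        · intro h; exact absurd (h.subset (by simp)) ha

theorem CC_mapY (w u : List A) (h : w ≠ []) :
    CC (w.reverse.map RLetter.Y) u ↔ w.Sublist u := by
  have : w.reverse.map RLetter.Y = (w.reverse.map RLetter.X).map flp := by simp [flp]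
  rw [this, ← List.reverse_reverse u, CC_flp, CC_mapX _ _ (by simpa using h), List.reverse_sublist,
    List.reverse_reverse]

/-- letters of the first X-block -/
def hd : List (RLetter A) → List A
  | .X a :: t => a :: hd t
  | _ => []

theorem hd_length (r : List (RLetter A)) : (hd r).length ≤ r.length := by
  induction r with
  | nil => simp [hd]
  | cons z t ih => cases z <;> simp [hd]; exact ih

theorem CC_prefix (r : List (RLetter A)) : ∀ w y, startsX r →
    (CC r w ↔ CC r (w ++ y) ∧ (hd r).Sublist w) := by
  induction r with
  | nil => rintro w y ⟨a, t, h⟩; simp at h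
  | cons z t ih =>
    rintro w y ⟨a, t', h⟩
    simp at h
    obtain ⟨rfl, rfl⟩ := h
    by_cases ha : a ∈ w
    · obtain ⟨w1, w2, rfl, h1⟩ := fact_left w a ha
      rw [hd, sub_fact h1, List.append_assoc, List.cons_append]
      rcases t with _ | ⟨b | b, t⟩
      · simp [CC, hd]
      · rw [CC_XX h1, CC_XX h1]
        exact ih _ _ ⟨_, _, rfl⟩
      · rw [CC_XY h1, CC_XY h1]
        simp [hd]
    · constructor
      · intro h; exact absurd (CC_mem h) ha
      · rintro ⟨-, h⟩; exact absurd (h.subset (by simp [hd])) ha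

theorem CC_suffix (r : List (RLetter A)) (y w : List A) (hr : startsY r) :
    CC r w ↔ CC r (y ++ w) ∧ (hd (r.map flp)).reverse.Sublist w := by
  rw [← CC_flp r w, CC_prefix _ _ y.reverse ((startsX_flp r).2 hr), ← List.reverse_append, CC_flp,
    ← List.reverse_sublist (l₂ := w), List.reverse_reverse]

theorem nb_XX (a b : A) (t : List (RLetter A)) :
    numBlocks (.X a :: .X b :: t) = numBlocks (.X b :: t) := by simp [numBlocks, sameDir]
theorem nb_XY (a b : A) (t : List (RLetter A)) :
    numBlocks (.X a :: .Y b :: t) = 1 + numBlocks (.Y b :: t) := by simp [numBlocks, sameDir]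

theorem nb_mapX (w : List A) : numBlocks (w.map RLetter.X) ≤ 1 := by
  induction w with
  | nil => simp [numBlocks]
  | cons a w ih =>
    rcases w with _ | ⟨b, w⟩
    · simp [numBlocks]
    · simp only [List.map_cons] at ih ⊢
      rw [nb_XX]; exact ih

theorem nb_mapY (w : List A) : numBlocks (w.map RLetter.Y) ≤ 1 := by
  have : w.map RLetter.Y = (w.map RLetter.X).map flp := by simp [flp]
  rw [this, numBlocks_flp]; exact nb_mapX w

theorem nb_le (r : List (RLetter A)) : numBlocks r ≤ r.length := by
  induction r with
  | nil => simp [numBlocks]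
  | cons z t ih =>
    rcases t with _ | ⟨z', t⟩
    · simp [numBlocks]
    · simp only [numBlocks, List.length_cons] at ih ⊢
      split <;> omega

theorem nb_one_X (r : List (RLetter A)) (h : startsX r) (h1 : numBlocks r ≤ 1) :
    ∃ w : List A, w ≠ [] ∧ r = w.map RLetter.X := by
  induction r with
  | nil => obtain ⟨a, t, h⟩ := h; simp at h
  | cons z t ih =>
    obtain ⟨a, t', h⟩ := h
    simp at h
    obtain ⟨rfl, rfl⟩ := h
    rcases t with _ | ⟨b | b, t⟩
    · exact ⟨[a], by simp, rfl⟩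
    · rw [nb_XX] at h1
      obtain ⟨w, hw, h⟩ := ih ⟨_, _, rfl⟩ h1
      exact ⟨a :: w, by simp, by rw [h]; rfl⟩
    · rw [nb_XY] at h1
      have : numBlocks (.Y b :: t) = 0 := by omega
      rcases t with _ | ⟨z, t⟩
      · simp [numBlocks] at this
      · exfalso
        have key : ∀ (t : List (RLetter A)) (z : RLetter A), numBlocks (z :: t) ≠ 0 := by
          intro t
          induction t with
          | nil => intro z; simp [numBlocks]
          | cons y t ih => intro z; simp only [numBlocks]; have := ih y; omega
        exact key _ _ this

theorem part1 (n : ℕ) (u v : List A) :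
    trir 1 n u v ↔ ∀ w : List A, w.length ≤ n → (w.Sublist u ↔ w.Sublist v) := by
  rw [trir_iff]
  constructor
  · intro h w hw
    by_cases h0 : w = []
    · simp [h0]
    · rw [← CC_mapX w u h0, ← CC_mapX w v h0]
      apply h
      rw [uRX_iff]
      refine Or.inl ⟨?_, nb_mapX w, by simpa using hw⟩
      cases w with
      | nil => exact absurd rfl h0
      | cons a w => exact ⟨a, _, rfl⟩
  · intro h r hr
    rw [uRX_iff] at hr
    rcases hr with ⟨h1, h2, h3⟩ | ⟨⟨a, t, rfl⟩, h2, h3⟩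
    · obtain ⟨w, hw, rfl⟩ := nb_one_X r h1 h2
      rw [CC_mapX _ _ hw, CC_mapX _ _ hw]
      exact h w (by simpa using h3)
    · exfalso
      rcases t with _ | ⟨z, t⟩
      · simp [numBlocks] at h2
      · have : CC (.X a :: .Y a :: z :: t) [] → True := fun _ => trivial
        obtain ⟨w, _, h⟩ := nb_one_X (.X a :: .Y a :: z :: t) ⟨_, _, rfl⟩ (by rw [nb_XY]; omega)
        rcases w with _ | ⟨_, _ | ⟨_, w⟩⟩ <;> simp at h

theorem part2 (m n : ℕ) (hm : 2 ≤ m) (hmn : m ≤ n) (u v : List A) :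
       (trir m n u v ↔
         (alph u = alph v ∧ tril (m-1) (n-1) u v ∧
          ∀ (a : A) (um up vm vp : List A),
            u = um ++ a :: up → a ∉ um → v = vm ++ a :: vp → a ∉ vm →
            (tril (m-1) (n-1) um vm ∧
             (n ≠ m → trir m (n-1) up vp) ∧ (n = m → trir (m-1) (n-1) up vp)))) := by
  constructor
  · intro h
    rw [trir_iff] at h
    refine ⟨?_, ?_, ?_⟩
    · ext a
      simp only [alph, List.mem_toFinset]
      exact h [.X a] ((uRX_iff ..).2 (Or.inl ⟨⟨_, _, rfl⟩, by simp [numBlocks]; omega, by simp <;> omega⟩))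
    · rw [tril_iff]
      intro r hr
      apply h
      rw [uRY_iff] at hr
      rw [uRX_iff]
      rcases hr with ⟨h1, h2, h3⟩ | ⟨h1, h2, h3⟩
      · exact Or.inr ⟨h1, by omega, by omega⟩
      · exact Or.inl ⟨h1, by omega, by omega⟩
    · intro a um up vm vp hu h1 hv h2
      have hup : trir m (n-1) up vp := by
        rw [trir_iff]
        intro r hr
        rw [uRX_iff] at hr
        rcases hr with ⟨⟨b, t, rfl⟩, h4, h5⟩ | ⟨h3, h4, h5⟩
        · have := h (.X a :: .X b :: t) ((uRX_iff ..).2 (Or.inl ⟨⟨_, _, rfl⟩, by rw [nb_XX]; exact h4,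
            by simp at h5 ⊢; omega⟩))
          rwa [hu, hv, CC_XX h1, CC_XX h2] at this
        · rw [CC_suffix r (um ++ [a]) up h3, CC_suffix r (vm ++ [a]) vp h3]
          have e1 : um ++ [a] ++ up = u := by simp [hu]
          have e2 : vm ++ [a] ++ vp = v := by simp [hv]
          rw [e1, e2]
          refine and_congr (h r ((uRX_iff ..).2 (Or.inr ⟨h3, by omega, by omega⟩))) ?_
          rw [← sub_fact h1 (w2 := up), ← sub_fact h2 (w2 := vp), ← hu, ← hv, ← CC_mapX _ _ (by simp), ← CC_mapX _ _ (by simp)]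
          have hl := hd_length (r.map flp)
          apply h
          rw [uRX_iff]
          refine Or.inl ⟨⟨_, _, rfl⟩, (nb_mapX _).trans (by omega), ?_⟩
          simp at hl ⊢; omega
      refine ⟨?_, fun _ => hup, ?_⟩
      · rw [tril_iff]
        intro r hr
        rw [uRY_iff] at hr
        rcases hr with ⟨⟨b, t, rfl⟩, h4, h5⟩ | ⟨h3, h4, h5⟩
        · have := h (.X a :: .Y b :: t) ((uRX_iff ..).2 (Or.inl ⟨⟨_, _, rfl⟩, by rw [nb_XY]; omega,
            by simp at h5 ⊢; omega⟩))
          rwa [hu, hv, CC_XY h1, CC_XY h2] at this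
        · rw [CC_prefix r um (a :: up) h3, CC_prefix r vm (a :: vp) h3, ← hu, ← hv]
          refine and_congr (h r ((uRX_iff ..).2 (Or.inl ⟨h3, by omega, by omega⟩))) ?_
          have hl := hd_length r
          have hne : hd r ≠ [] := by
            obtain ⟨b, t, rfl⟩ := h3
            simp [hd]
          rw [← CC_mapY _ _ hne, ← CC_mapY _ _ hne]
          have hb := nb_mapY (hd r).reverse
          have hlen : ((hd r).reverse.map RLetter.Y).length = (hd r).length := by simp
          have hne' : (hd r).reverse ≠ [] := by simpa using hne
          generalize (hd r).reverse = s at *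
          rcases s with _ | ⟨b, s⟩
          · exact absurd rfl hne'
          · simp only [List.map_cons] at hb hlen ⊢
            rw [← CC_XY h1 (w2 := up), ← CC_XY h2 (w2 := vp), ← hu, ← hv]
            apply h
            rw [uRX_iff]
            refine Or.inl ⟨⟨_, _, rfl⟩, ?_, ?_⟩
            · rw [nb_XY]; omega
            · rw [List.length_cons]; omega
      · intro _
        rw [trir_iff] at hup ⊢
        intro r hr
        apply hup
        rw [uRX_iff] at hr ⊢
        rcases hr with ⟨h3, h4, h5⟩ | ⟨h3, h4, h5⟩
        · exact Or.inl ⟨h3, by omega, h5⟩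
        · exact Or.inr ⟨h3, by omega, h5⟩
  · rintro ⟨hal, hl, hf⟩
    have hal : ∀ a, a ∈ u ↔ a ∈ v := by
      intro a
      rw [← List.mem_toFinset, ← List.mem_toFinset]
      unfold alph at hal
      rw [hal]
    rw [trir_iff]
    intro r hr
    rw [uRX_iff] at hr
    rw [tril_iff] at hl
    rcases hr with ⟨⟨a, t, rfl⟩, h4, h5⟩ | ⟨h3, h4, h5⟩
    · by_cases ha : a ∈ u
      · obtain ⟨um, up, hu, h1⟩ := fact_left u a ha
        obtain ⟨vm, vp, hv, h2⟩ := fact_left v a ((hal a).1 ha)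
        obtain ⟨g1, g2, g3⟩ := hf a um up vm vp hu h1 hv h2
        rcases t with _ | ⟨b | b, t⟩
        · exact hal a
        · rw [hu, hv, CC_XX h1, CC_XX h2]
          rw [nb_XX] at h4
          rw [List.length_cons] at h5
          have hle := nb_le (.X b :: t)
          by_cases hn : n = m
          · have := g3 hn
            rw [trir_iff] at this
            exact this _ ((uRX_iff ..).2 (Or.inl ⟨⟨_, _, rfl⟩, by omega, by omega⟩))
          · have := g2 hn
            rw [trir_iff] at this
            exact this _ ((uRX_iff ..).2 (Or.inl ⟨⟨_, _, rfl⟩, by omega, by omega⟩))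
        · rw [hu, hv, CC_XY h1, CC_XY h2]
          rw [nb_XY] at h4
          rw [List.length_cons] at h5
          rw [tril_iff] at g1
          exact g1 _ ((uRY_iff ..).2 (Or.inl ⟨⟨_, _, rfl⟩, by omega, by omega⟩))
      · constructor
        · intro h; exact absurd (CC_mem h) ha
        · intro h; exact absurd ((hal a).2 (CC_mem h)) ha
    · apply hl
      rw [uRY_iff]
      exact Or.inl ⟨h3, by omega, by omega⟩

/-- Characteristic properties of the relations `⊳_{m,n}` and `⊲_{m,n}`. -/
theorem statement3 :
    (∀ n : ℕ, 1 ≤ n → ∀ u v : List A,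
       (trir 1 n u v ↔ tril 1 n u v) ∧
       (trir 1 n u v ↔ ∀ w : List A, w.length ≤ n → (w.Sublist u ↔ w.Sublist v))) ∧
    (∀ m n : ℕ, 2 ≤ m → m ≤ n → ∀ u v : List A,
       (trir m n u v ↔
         (alph u = alph v ∧ tril (m-1) (n-1) u v ∧
          ∀ (a : A) (um up vm vp : List A),
            u = um ++ a :: up → a ∉ um → v = vm ++ a :: vp → a ∉ vm →
            (tril (m-1) (n-1) um vm ∧
             (n ≠ m → trir m (n-1) up vp) ∧ (n = m → trir (m-1) (n-1) up vp))))) ∧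
    (∀ m n : ℕ, 2 ≤ m → m ≤ n → ∀ u v : List A,
       (tril m n u v ↔
         (alph u = alph v ∧ trir (m-1) (n-1) u v ∧
          ∀ (a : A) (um up vm vp : List A),
            u = um ++ a :: up → a ∉ up → v = vm ++ a :: vp → a ∉ vp →
            (trir (m-1) (n-1) up vp ∧
             (n ≠ m → tril m (n-1) um vm) ∧ (n = m → tril (m-1) (n-1) um vm))))) := by
  refine ⟨fun n _ u v => ⟨?_, part1 n u v⟩, fun m n hm hmn u v => part2 m n hm hmn u v, ?_⟩
  · rw [← trir_rev, part1, part1]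
    constructor
    · intro h w hw
      have := h w.reverse (by simpa using hw)
      rwa [← List.reverse_sublist, List.reverse_reverse, ← List.reverse_sublist (l₂ := v),
        List.reverse_reverse] at this
    · intro h w hw
      have := h w.reverse (by simpa using hw)
      rwa [List.reverse_sublist, List.reverse_sublist] at this
  · intro m n hm hmn u v
    rw [← trir_rev, part2 m n hm hmn, tril_rev]
    have hr : ∀ w : List A, alph w.reverse = alph w := by intro w; simp [alph]
    rw [hr, hr]
    refine and_congr Iff.rfl (and_congr Iff.rfl ?_)
    have key : ∀ (w x y : List A) (a : A), w.reverse = y.reverse ++ a :: x.reverse ↔ w = x ++ a :: y := by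
      intro w x y a
      rw [← List.reverse_inj (xs := w)]
      simp
    constructor
    · intro h a um up vm vp hu h1 hv h2
      have := h a up.reverse um.reverse vp.reverse vm.reverse ((key ..).2 hu) (by simpa using h1)
        ((key ..).2 hv) (by simpa using h2)
      simpa only [tril_rev, trir_rev] using this
    · intro h a um up vm vp hu h1 hv h2
      have := h a up.reverse um.reverse vp.reverse vm.reverse
        ((key ..).1 (by simpa using hu)) (by simpa using h1)
        ((key ..).1 (by simpa using hv)) (by simpa using h2)
      simpa only [tril_rev, trir_rev] using this

end RankerPaper
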